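/- Let n ≥ 1 and let K = ℚ(q) be the field of rational functions in one variable q over ℚ. In the group algebra K[Sₙ], let κ := Σ_{σ ∈ Sₙ} q^{maj(σ)} σ and φₙ := Σ_{σ ∈ Sₙ} (−1)^{d(σ)} C(n−1, d(σ))^{−1} σ. Then φₙ · κ = (Π_{i=1}^{n−1} (1 − q^i)) · φₙ (the group-algebra form of the internal-product identity Kₙ(q) ∗ Φₙ = (q)_{n−1} Φₙ, where Kₙ(q) = Σ_{|C|=n} q^{maj(C)} R_C). -/

import Mathlib

open Finset

namespace Descents14

noncomputable section

/-- The descent set of a permutation `σ` of `{0,…,n}`: the set of `i ∈ Fin n`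
(representing the position `i+1 ∈ {1,…,n}`) with `σ(i) > σ(i+1)`. -/
def Des {n : ℕ} (σ : Equiv.Perm (Fin (n + 1))) : Finset (Fin n) :=
  Finset.univ.filter fun i => σ i.succ < σ i.castSucc

/-- The major index `maj(σ) = ∑_{i ∈ Des(σ)} i` (positions counted `1,…,n`). -/
def maj {n : ℕ} (σ : Equiv.Perm (Fin (n + 1))) : ℕ :=
  ∑ i ∈ Des σ, ((i : ℕ) + 1)

/-- `κ = ∑_σ q^{maj(σ)} σ` in the group algebra of `S_{n+1}` over `K = ℚ(q)`. -/
def kappa (n : ℕ) : MonoidAlgebra (RatFunc ℚ) (Equiv.Perm (Fin (n + 1))) :=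
  ∑ σ : Equiv.Perm (Fin (n + 1)),
    ((RatFunc.X : RatFunc ℚ) ^ maj σ) • MonoidAlgebra.single σ (1 : RatFunc ℚ)

/-- The first Eulerian element `φ = ∑_σ (−1)^{d(σ)} C(n−1,d(σ))⁻¹ σ` over `K = ℚ(q)`. -/
def phi (n : ℕ) : MonoidAlgebra (RatFunc ℚ) (Equiv.Perm (Fin (n + 1))) :=
  ∑ σ : Equiv.Perm (Fin (n + 1)),
    ((-1 : RatFunc ℚ) ^ (Des σ).card / (Nat.choose n (Des σ).card : RatFunc ℚ)) •
      MonoidAlgebra.single σ (1 : RatFunc ℚ)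

/-! By stable sorting, each word `g` of length `n + 1` in the alphabet `{0, …, k - 1}` has a sorting
permutation, and `C(k + n - d(σ), n + 1)` words have the sorting permutation `σ`. The linear
coefficient of this polynomial in `k` is, up to the factor `n + 1`, the coefficient of `σ` in `φ`.

For a permutation `τ` and a set `S`, the words with `Des ((sort g)⁻¹ τ) ⊆ S` are those for which
`g ∘ τ` is weakly increasing (strictly at the descents of `τ`) on each of the blocks into which `S`
cuts the positions. If `S` is nonempty, the number of such words is a product of at least two
polynomials vanishing at `k = 0`, so it has no linear term. Comparing linear coefficients shows
`φ B_S = 0`, where `B_S` is the sum of the permutations with descent set in `S`.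

Finally `κ = ∑_S (∏_{i ∈ S} qⁱ) (∏_{i ∉ S} (1 - qⁱ)) B_S`, and in `φ κ` only the term of `S = ∅`,
where `B_∅ = 1`, survives.
-/

section ChoosePoly

open Polynomial

/-- The binomial coefficient `C(X + e, m)` as a polynomial in `X`, so that counts of words over a
`k`-letter alphabet have a linear coefficient in `k`. -/
def choosePoly (e m : ℕ) : ℚ[X] :=
  C ((m.factorial : ℚ)⁻¹) * (descPochhammer ℚ m).comp (X + (e : ℚ[X]))

lemma choosePoly_eval_natCast (e m k : ℕ) :
    (choosePoly e m).eval (k : ℚ) = ((k + e).choose m : ℚ) := by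
  rw [choosePoly, eval_mul, eval_C, eval_comp, eval_add, eval_X, eval_natCast, ← Nat.cast_add,
    descPochhammer_eval_eq_descFactorial, Nat.descFactorial_eq_factorial_mul_choose, Nat.cast_mul,
    inv_mul_cancel_left₀ (Nat.cast_ne_zero.2 m.factorial_ne_zero)]

lemma X_dvd_choosePoly {e m : ℕ} (h : e < m) : X ∣ choosePoly e m := by
  rw [X_dvd_iff, coeff_zero_eq_eval_zero, ← Nat.cast_zero, choosePoly_eval_natCast, zero_add,
    Nat.choose_eq_zero_of_lt h, Nat.cast_zero]

lemma descPochhammer_eval_neg_one {R : Type*} [CommRing R] (s : ℕ) :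
    (descPochhammer R s).eval (-1) = (-1) ^ s * (s.factorial : R) := by
  have h := ascPochhammer_eval_neg_eq_descPochhammer R (-1) s
  rw [neg_neg, ascPochhammer_eval_one] at h
  rw [h, ← mul_assoc, ← mul_pow, neg_one_mul, neg_neg, one_pow, one_mul]

lemma descPochhammer_comp_X_add_natCast {R : Type*} [CommRing R] (e s : ℕ) :
    (descPochhammer R (e + (s + 1))).comp (X + (e : R[X])) =
      X * ((descPochhammer R e).comp (X + (e : R[X])) * (descPochhammer R s).comp (X - 1)) := by
  rw [← descPochhammer_mul, mul_comp, comp_assoc, sub_comp, X_comp, natCast_comp,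
    add_sub_cancel_right, comp_X, descPochhammer_succ_left, mul_left_comm]

lemma choosePoly_coeff_one (e s : ℕ) :
    ((e + s + 1 : ℕ) : ℚ) * (choosePoly e (e + s + 1)).coeff 1 =
      (-1) ^ s / ((e + s).choose s : ℚ) := by
  have coeff_eq : (choosePoly e (e + s + 1)).coeff 1 =
      ((e + s + 1).factorial : ℚ)⁻¹ * (e.factorial * ((-1) ^ s * s.factorial)) := by
    rw [choosePoly, coeff_C_mul, add_assoc, descPochhammer_comp_X_add_natCast, ← zero_add 1,
      coeff_X_mul, coeff_zero_eq_eval_zero, eval_mul, eval_comp, eval_comp]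
    simp [descPochhammer_eval_eq_descFactorial, Nat.descFactorial_self,
      descPochhammer_eval_neg_one]
  have choose_ne_zero : ((e + s).choose s : ℚ) ≠ 0 :=
    Nat.cast_ne_zero.2 (Nat.choose_pos (Nat.le_add_left s e)).ne'
  have factorial_eq : ((e + s).choose s * e.factorial * s.factorial : ℚ) = (e + s).factorial := by
    exact_mod_cast Nat.add_choose_mul_factorial_mul_factorial e s
  rw [coeff_eq, Nat.factorial_succ, Nat.cast_mul, ← factorial_eq]
  field_simp

end ChoosePoly

lemma sum_range_choose_add {e r : ℕ} (h : e ≤ r) (m : ℕ) :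
    ∑ a ∈ range m, (a + e).choose r = (m + e).choose (r + 1) := by
  induction m with
  | zero => simp [Nat.choose_eq_zero_of_lt (Nat.lt_succ_of_le h)]
  | succ m ih =>
    rw [sum_range_succ, ih, Nat.add_right_comm, Nat.choose_succ_succ, add_comm]

section Chains

variable {α : Type*} [Fintype α] {n : ℕ}

open Classical in
/-- The words `f 0, …, f n` in the alphabet `α` whose adjacent letters satisfy
`r i (f i) (f (i + 1))`. -/
def chains (r : Fin n → α → α → Prop) : Finset (Fin (n + 1) → α) :=
  {f | ∀ i, r i (f i.castSucc) (f i.succ)}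

open Classical in
/-- The words of `chains r` that end in the letter `b`. -/
def chainsTo (r : Fin n → α → α → Prop) (b : α) : Finset (Fin (n + 1) → α) :=
  {f ∈ chains r | f (Fin.last n) = b}

lemma mem_chainsTo {r : Fin n → α → α → Prop} {b : α} {f : Fin (n + 1) → α} :
    f ∈ chainsTo r b ↔ (∀ i, r i (f i.castSucc) (f i.succ)) ∧ f (Fin.last n) = b := by
  simp [chainsTo, chains]

lemma card_chains (r : Fin n → α → α → Prop) : #(chains r) = ∑ b, #(chainsTo r b) := by
  classical
  exact (card_eq_sum_card_fiberwise fun f _ => mem_univ (f (Fin.last n))).trans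
    (sum_congr rfl fun b _ => congrArg card (by ext f; simp [chainsTo]))

lemma card_chainsTo_zero (r : Fin 0 → α → α → Prop) (b : α) : #(chainsTo r b) = 1 := by
  refine card_eq_one.2 ⟨fun _ => b, ?_⟩
  ext f
  simp [mem_chainsTo, funext_iff, Fin.forall_fin_one]

lemma mem_chainsTo_succ {r : Fin (n + 1) → α → α → Prop} {b : α} {f : Fin (n + 2) → α} :
    f ∈ chainsTo r b ↔
      Fin.init f ∈ chainsTo (fun i : Fin n => r i.castSucc) (f (Fin.last n).castSucc) ∧
        r (Fin.last n) (f (Fin.last n).castSucc) b ∧ f (Fin.last (n + 1)) = b := by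
  simp only [mem_chainsTo, Fin.forall_fin_succ', Fin.init, Fin.succ_last, Fin.succ_castSucc,
    and_true, and_assoc]
  exact and_congr_right fun _ => and_congr_left fun h => by rw [h]

open Classical in
lemma card_chainsTo_succ (r : Fin (n + 1) → α → α → Prop) (b : α) :
    #(chainsTo r b) =
      ∑ a with r (Fin.last n) a b, #(chainsTo (fun i : Fin n => r i.castSucc) a) := by
  rw [card_eq_sum_card_fiberwise (f := fun f => f (Fin.last n).castSucc)
    (t := ({a | r (Fin.last n) a b} : Finset α))
    fun f hf => by simpa using (mem_chainsTo_succ.1 (mem_coe.1 hf)).2.1]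
  refine sum_congr rfl fun a ha => card_nbij' Fin.init (Fin.snoc · b) ?_ ?_ ?_ ?_
  · intro f hf
    obtain ⟨hchain, rfl⟩ := mem_filter.1 (mem_coe.1 hf)
    exact (mem_chainsTo_succ.1 hchain).1
  · intro f hf
    have hlast : f (Fin.last n) = a := (mem_chainsTo.1 hf).2
    simpa [mem_chainsTo_succ, hlast] using ⟨hf, (mem_filter.1 ha).2⟩
  · intro f hf
    obtain rfl := (mem_chainsTo.1 (mem_filter.1 hf).1).2
    exact Fin.snoc_init_self f
  · exact fun f _ => Fin.init_snoc (α := fun _ => α) b f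

end Chains

/-- The condition imposed on two adjacent letters of a word: none, `≤`, or `<`. -/
inductive Link
  | free
  | weak
  | strict
deriving DecidableEq

namespace Link

/-- The relation between adjacent letters that a link stands for. -/
def Rel {α : Type*} [Preorder α] : Link → α → α → Prop
  | free, _, _ => True
  | weak, a, b => a ≤ b
  | strict, a, b => a < b

/-- The number of letters of `{0, …, k - 1}` that a link allows in front of the letter `b`; they
are the letters below this number. -/
def cutoff (k b : ℕ) : Link → ℕ
  | free => k
  | weak => b + 1
  | strict => b

lemma rel_iff_lt_cutoff {k : ℕ} (l : Link) (a b : Fin k) : l.Rel a b ↔ (a : ℕ) < l.cutoff k b := by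
  cases l with
  | free => exact iff_of_true trivial a.isLt
  | weak => exact Fin.le_def.trans Nat.lt_succ_iff.symm
  | strict => exact Fin.lt_def

lemma cutoff_le {k : ℕ} (l : Link) (b : Fin k) : l.cutoff k b ≤ k := by
  cases l with
  | free => exact le_rfl
  | weak => exact b.isLt
  | strict => exact b.isLt.le

open Classical in
lemma sum_choose_add_filter_rel {k e r : ℕ} (l : Link) (h : e ≤ r) (b : Fin k) :
    ∑ a : Fin k with l.Rel a b, (a + e : ℕ).choose r = (l.cutoff k b + e).choose (r + 1) := by
  rw [← sum_range_choose_add h]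
  refine sum_nbij (fun a => (a : ℕ)) ?_ Fin.val_injective.injOn ?_ fun _ _ => rfl
  · intro a ha
    simpa [rel_iff_lt_cutoff] using ha
  · intro a ha
    have hcut : a < l.cutoff k b := mem_range.1 ha
    exact ⟨⟨a, hcut.trans_le (l.cutoff_le b)⟩, by simpa [rel_iff_lt_cutoff] using hcut, rfl⟩

end Link

section LinkedChains

variable {n : ℕ}

open Polynomial

lemma card_filter_weak_castSucc (c : Fin (n + 1) → Link) :
    #{i | c i = .weak} =
      #{i : Fin n | c i.castSucc = .weak} + if c (Fin.last n) = .weak then 1 else 0 := by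
  simp only [card_filter, Fin.sum_univ_castSucc]

lemma card_chainsTo_rel_of_ne_free {c : Fin n → Link} (hc : ∀ i, c i ≠ .free) {k : ℕ}
    (b : Fin k) : #(chainsTo (fun i => (c i).Rel) b) = (b + #{i | c i = .weak}).choose n := by
  induction n generalizing b with
  | zero => simp [card_chainsTo_zero]
  | succ n ih =>
    rw [card_chainsTo_succ, sum_congr rfl fun a _ => ih (fun i => hc i.castSucc) a,
      Link.sum_choose_add_filter_rel _ (card_finset_fin_le _), card_filter_weak_castSucc]
    cases hlast : c (Fin.last n) with
    | free => exact absurd hlast (hc _)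
    | weak => simp [Link.cutoff, add_assoc, add_comm 1]
    | strict => simp [Link.cutoff]

lemma card_chains_rel_of_ne_free {c : Fin n → Link} (hc : ∀ i, c i ≠ .free) (k : ℕ) :
    #(chains (α := Fin k) fun i => (c i).Rel) = (k + #{i | c i = .weak}).choose (n + 1) := by
  rw [card_chains, sum_congr rfl fun b _ => card_chainsTo_rel_of_ne_free hc b,
    Fin.sum_univ_eq_sum_range (fun b => (b + #{i | c i = .weak}).choose n),
    sum_range_choose_add (card_finset_fin_le _)]

-- A free link forgets the letter before it, so it turns the count `C(b + e, r)` so far into a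
-- factor depending on `k` alone, and this factor vanishes at `k = 0`.
lemma exists_card_chainsTo_rel_eq_eval_mul_choose (c : Fin n → Link) :
    ∃ (Q : ℚ[X]) (e r : ℕ), e ≤ r ∧ ((∃ i, c i = .free) → X ∣ Q) ∧
      ∀ (k : ℕ) (b : Fin k),
        (#(chainsTo (fun i => (c i).Rel) b) : ℚ) = Q.eval (k : ℚ) * ((b + e : ℕ).choose r : ℚ) := by
  classical
  induction n with
  | zero => exact ⟨1, 0, 0, le_rfl, fun ⟨i, _⟩ => i.elim0, by simp [card_chainsTo_zero]⟩
  | succ n ih =>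
    obtain ⟨Q, e, r, her, hfree, hcard⟩ := ih fun i => c i.castSucc
    have card_eq (k : ℕ) (b : Fin k) : (#(chainsTo (fun i => (c i).Rel) b) : ℚ) =
        Q.eval (k : ℚ) * (((c (Fin.last n)).cutoff k b + e).choose (r + 1) : ℚ) := by
      rw [card_chainsTo_succ, Nat.cast_sum, sum_congr rfl fun a _ => hcard k a, ← mul_sum,
        ← Nat.cast_sum, Link.sum_choose_add_filter_rel _ her]
    have dvd_of_last (hlast : c (Fin.last n) ≠ .free) : (∃ i, c i = .free) → X ∣ Q := by
      rw [Fin.exists_fin_succ', or_iff_left hlast]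
      exact hfree
    cases hlast : c (Fin.last n) with
    | free =>
      refine ⟨Q * choosePoly e (r + 1), 0, 0, le_rfl,
        fun _ => (X_dvd_choosePoly (Nat.lt_succ_of_le her)).mul_left Q, fun k b => ?_⟩
      simp [card_eq, hlast, Link.cutoff, choosePoly_eval_natCast]
    | weak =>
      refine ⟨Q, e + 1, r + 1, Nat.succ_le_succ her, dvd_of_last (by simp [hlast]), fun k b => ?_⟩
      simp [card_eq, hlast, Link.cutoff, add_assoc, add_comm 1]
    | strict =>
      refine ⟨Q, e, r + 1, Nat.le_succ_of_le her, dvd_of_last (by simp [hlast]), fun k b => ?_⟩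
      simp [card_eq, hlast, Link.cutoff]

lemma exists_X_sq_dvd_card_chains_rel_eq_eval {c : Fin n → Link} (hc : ∃ i, c i = .free) :
    ∃ P : ℚ[X], X ^ 2 ∣ P ∧
      ∀ k : ℕ, (#(chains (α := Fin k) fun i => (c i).Rel) : ℚ) = P.eval (k : ℚ) := by
  obtain ⟨Q, e, r, her, hfree, hcard⟩ := exists_card_chainsTo_rel_eq_eval_mul_choose c
  refine ⟨Q * choosePoly e (r + 1),
    sq (X : ℚ[X]) ▸ mul_dvd_mul (hfree hc) (X_dvd_choosePoly (Nat.lt_succ_of_le her)), fun k => ?_⟩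
  rw [card_chains, Nat.cast_sum, sum_congr rfl fun b _ => hcard k b, ← mul_sum, ← Nat.cast_sum,
    Fin.sum_univ_eq_sum_range (fun b => (b + e).choose r), sum_range_choose_add her, eval_mul,
    choosePoly_eval_natCast]

end LinkedChains

section Sorting

variable {n : ℕ}

lemma sort_inv_lt_sort_inv_iff {α : Type*} [LinearOrder α] (g : Fin n → α) (a b : Fin n) :
    (Tuple.sort g)⁻¹ a < (Tuple.sort g)⁻¹ b ↔ g a < g b ∨ g a = g b ∧ a < b := by
  rw [← (Tuple.graphEquiv₂ g).lt_iff_lt, Tuple.graphEquiv₂_apply, Tuple.graphEquiv₂_apply,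
    ← Equiv.Perm.mul_apply, ← Equiv.Perm.mul_apply,
    mul_inv_cancel]
  exact Prod.Lex.toLex_lt_toLex

lemma notMem_Des {σ : Equiv.Perm (Fin (n + 1))} {i : Fin n} :
    i ∉ Des σ ↔ σ i.castSucc < σ i.succ := by
  have hne : σ i.castSucc ≠ σ i.succ := σ.injective.ne (Fin.castSucc_lt_succ (i := i)).ne
  simp [Des, hne.le_iff_lt]

lemma Des_eq_empty_iff {σ : Equiv.Perm (Fin (n + 1))} : Des σ = ∅ ↔ σ = 1 := by
  simp only [eq_empty_iff_forall_notMem, notMem_Des]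
  rw [← Fin.strictMono_iff_lt_succ]
  constructor
  · intro h
    exact Equiv.coe_fn_injective
      ((h.range_inj strictMono_id).1 (by simp [σ.surjective.range_eq]))
  · rintro rfl
    exact strictMono_id

/-- The link that records how `τ` compares the positions `i` and `i + 1` for `i ∉ S`: ties
between letters are allowed exactly at the ascents of `τ`, and there is no condition on `S`. -/
def link (τ : Equiv.Perm (Fin (n + 1))) (S : Finset (Fin n)) (i : Fin n) : Link :=
  if i ∈ S then .free else if i ∈ Des τ then .strict else .weak

lemma link_rel_iff {α : Type*} [LinearOrder α] (g : Fin (n + 1) → α)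
    (τ : Equiv.Perm (Fin (n + 1))) (S : Finset (Fin n)) (i : Fin n) :
    (link τ S i).Rel (g (τ i.castSucc)) (g (τ i.succ)) ↔
      (i ∈ Des ((Tuple.sort g)⁻¹ * τ) → i ∈ S) := by
  rw [← not_imp_not, notMem_Des, Equiv.Perm.mul_apply, Equiv.Perm.mul_apply,
    sort_inv_lt_sort_inv_iff]
  by_cases hS : i ∈ S
  · simp [link, hS, Link.Rel]
  by_cases hD : i ∈ Des τ
  · simp [link, hS, hD, Link.Rel, mt notMem_Des.2 (not_not.2 hD)]
  · simp [link, hS, hD, Link.Rel, notMem_Des.1 hD, le_iff_lt_or_eq]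

lemma card_Des_sort_inv_mul_subset {α : Type*} [LinearOrder α] [Fintype α]
    (τ : Equiv.Perm (Fin (n + 1))) (S : Finset (Fin n)) :
    #{g : Fin (n + 1) → α | Des ((Tuple.sort g)⁻¹ * τ) ⊆ S} =
      #(chains (α := α) fun i => (link τ S i).Rel) := by
  refine card_equiv (τ.symm.arrowCongr (Equiv.refl α)) fun g => ?_
  simp [chains, link_rel_iff, subset_iff]

lemma card_sort_eq (k : ℕ) (σ : Equiv.Perm (Fin (n + 1))) :
    #{g : Fin (n + 1) → Fin k | Tuple.sort g = σ} = (k + (n - #(Des σ))).choose (n + 1) := by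
  have sort_eq_iff (g : Fin (n + 1) → Fin k) :
      Tuple.sort g = σ ↔ Des ((Tuple.sort g)⁻¹ * σ) ⊆ ∅ := by
    rw [subset_empty, Des_eq_empty_iff, inv_mul_eq_one]
  have filter_weak : ({i | link σ ∅ i = .weak} : Finset (Fin n)) = (Des σ)ᶜ := by
    ext i
    simp [link]
  have ne_free (i : Fin n) : link σ ∅ i ≠ .free := by
    simp only [link, notMem_empty, if_false]
    split_ifs <;> simp
  simp only [sort_eq_iff]
  rw [card_Des_sort_inv_mul_subset, card_chains_rel_of_ne_free ne_free, filter_weak, card_compl,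
    Fintype.card_fin]

lemma sum_choose_Des_inv_mul_subset (k : ℕ) (τ : Equiv.Perm (Fin (n + 1))) (S : Finset (Fin n)) :
    ∑ σ : Equiv.Perm (Fin (n + 1)) with Des (σ⁻¹ * τ) ⊆ S,
        (k + (n - #(Des σ))).choose (n + 1) =
      #(chains (α := Fin k) fun i => (link τ S i).Rel) := by
  rw [← card_Des_sort_inv_mul_subset, card_eq_sum_card_fiberwise (f := Tuple.sort)
    (t := {σ : Equiv.Perm (Fin (n + 1)) | Des (σ⁻¹ * τ) ⊆ S}) fun g hg => by simpa using hg]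
  refine sum_congr rfl fun σ hσ => ?_
  rw [← card_sort_eq, filter_filter]
  congr 1
  ext g
  simp only [mem_filter, mem_univ, true_and] at hσ ⊢
  exact ⟨fun h => ⟨h ▸ hσ, h⟩, And.right⟩

end Sorting

section EulerianCoeff

variable {n : ℕ}

open Polynomial

/-- The coefficient of `σ` in the first Eulerian element. -/
def eulerianCoeff (σ : Equiv.Perm (Fin (n + 1))) : ℚ :=
  (-1) ^ #(Des σ) / (n.choose #(Des σ) : ℚ)

lemma eulerianCoeff_eq_choosePoly_coeff_one (σ : Equiv.Perm (Fin (n + 1))) :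
    eulerianCoeff σ = (n + 1 : ℕ) * (choosePoly (n - #(Des σ)) (n + 1)).coeff 1 := by
  have h := choosePoly_coeff_one (n - #(Des σ)) #(Des σ)
  rw [Nat.sub_add_cancel (card_finset_fin_le _)] at h
  exact h.symm

lemma sum_eulerianCoeff_Des_inv_mul_subset {S : Finset (Fin n)} (hS : S.Nonempty)
    (τ : Equiv.Perm (Fin (n + 1))) :
    ∑ σ : Equiv.Perm (Fin (n + 1)) with Des (σ⁻¹ * τ) ⊆ S, eulerianCoeff σ = 0 := by
  obtain ⟨i, hi⟩ := hS
  obtain ⟨P, hdvd, hP⟩ :=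
    exists_X_sq_dvd_card_chains_rel_eq_eval (c := link τ S) ⟨i, if_pos hi⟩
  have sum_choosePoly : ∑ σ : Equiv.Perm (Fin (n + 1)) with Des (σ⁻¹ * τ) ⊆ S,
      choosePoly (n - #(Des σ)) (n + 1) = P := by
    refine eq_of_infinite_eval_eq _ _
      ((Set.infinite_range_of_injective Nat.cast_injective).mono ?_)
    rintro _ ⟨k, rfl⟩
    simp only [Set.mem_ofPred_eq, eval_finsetSum, choosePoly_eval_natCast, ← hP,
      ← sum_choose_Des_inv_mul_subset, Nat.cast_sum]
  simp only [eulerianCoeff_eq_choosePoly_coeff_one]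
  rw [← mul_sum, ← finsetSum_coeff, sum_choosePoly, X_pow_dvd_iff.1 hdvd 1 one_lt_two, mul_zero]

end EulerianCoeff

section DescentAlgebra

open MonoidAlgebra

lemma prod_eq_sum_superset {ι R : Type*} [Fintype ι] [DecidableEq ι] [CommRing R] (x : ι → R)
    (D : Finset ι) :
    ∏ i ∈ D, x i = ∑ S with D ⊆ S, (∏ i ∈ S, x i) * ∏ i ∈ Sᶜ, (1 - x i) := by
  have subset_iff_compl (S : Finset ι) : (∀ i ∈ Sᶜ, i ∉ D) ↔ D ⊆ S :=
    ⟨fun h i hi => by_contra fun hS => h i (mem_compl.2 hS) hi,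
      fun h i hS hi => mem_compl.1 hS (h hi)⟩
  calc ∏ i ∈ D, x i = ∏ i, if i ∈ D then x i else 1 := by simp
    _ = ∏ i, (x i + if i ∉ D then 1 - x i else 0) :=
      prod_congr rfl fun i _ => by split_ifs <;> simp_all
    _ = ∑ S, (∏ i ∈ S, x i) * ∏ i ∈ Sᶜ, if i ∉ D then 1 - x i else 0 := by
      rw [prod_add, powerset_univ]
      simp only [compl_eq_univ_sdiff]
    _ = ∑ S with D ⊆ S, (∏ i ∈ S, x i) * ∏ i ∈ Sᶜ, (1 - x i) := by
      simp only [prod_ite_zero, subset_iff_compl, mul_ite, mul_zero, sum_filter]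

variable {n : ℕ}

/-- The sum of the permutations whose descent set lies in `S`, an element of Solomon's descent
algebra. -/
def descentSum (R : Type*) [Semiring R] (S : Finset (Fin n)) :
    MonoidAlgebra R (Equiv.Perm (Fin (n + 1))) :=
  ∑ σ with Des σ ⊆ S, single σ 1

lemma coeff_descentSum {R : Type*} [Semiring R] (S : Finset (Fin n))
    (τ : Equiv.Perm (Fin (n + 1))) :
    (descentSum R S).coeff τ = if Des τ ⊆ S then 1 else 0 := by
  simp [descentSum, coeff_sum, Finsupp.single_apply]

lemma descentSum_empty {R : Type*} [Semiring R] : descentSum R (∅ : Finset (Fin n)) = 1 := by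
  simp [descentSum, Des_eq_empty_iff, one_def, filter_eq']

/-- The sum of all permutations, each weighted by the product of `x i` over its descents `i`;
`kappa` is the case `x i = q ^ (i + 1)`. -/
def descentSeries {R : Type*} [CommSemiring R] (x : Fin n → R) :
    MonoidAlgebra R (Equiv.Perm (Fin (n + 1))) :=
  ∑ σ, single σ (∏ i ∈ Des σ, x i)

lemma coeff_descentSeries {R : Type*} [CommSemiring R] (x : Fin n → R)
    (τ : Equiv.Perm (Fin (n + 1))) : (descentSeries x).coeff τ = ∏ i ∈ Des τ, x i := by
  simp [descentSeries, coeff_sum, Finsupp.single_apply]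

lemma descentSeries_eq_sum_smul_descentSum {R : Type*} [CommRing R] (x : Fin n → R) :
    descentSeries x = ∑ S, ((∏ i ∈ S, x i) * ∏ i ∈ Sᶜ, (1 - x i)) • descentSum R S := by
  ext τ
  rw [coeff_descentSeries, prod_eq_sum_superset]
  simp [coeff_sum, coeff_descentSum, sum_filter]

/-- The first Eulerian element with coefficients in a `ℚ`-algebra; `phi` is the case `R = ℚ(q)`. -/
def firstEulerian (R : Type*) [Semiring R] [Algebra ℚ R] (n : ℕ) :
    MonoidAlgebra R (Equiv.Perm (Fin (n + 1))) :=
  ∑ σ, single σ (algebraMap ℚ R (eulerianCoeff σ))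

lemma firstEulerian_mul_descentSum {R : Type*} [Semiring R] [Algebra ℚ R] {S : Finset (Fin n)}
    (hS : S.Nonempty) : firstEulerian R n * descentSum R S = 0 := by
  ext τ
  simp [firstEulerian, sum_mul, coeff_sum, coeff_descentSum, ← sum_filter, ← map_sum,
    sum_eulerianCoeff_Des_inv_mul_subset hS]

theorem phi_kappa_product_general {R : Type*} [CommRing R] [Algebra ℚ R] (x : Fin n → R) :
    firstEulerian R n * descentSeries x = (∏ i, (1 - x i)) • firstEulerian R n := by
  rw [descentSeries_eq_sum_smul_descentSum, mul_sum, sum_eq_single ∅]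
  · simp [descentSum_empty]
  · intro S _ hS
    rw [mul_smul_comm, firstEulerian_mul_descentSum (nonempty_iff_ne_empty.2 hS), smul_zero]
  · simp

end DescentAlgebra

lemma phi_eq_firstEulerian (n : ℕ) : phi n = firstEulerian (RatFunc ℚ) n := by
  simp [phi, firstEulerian, eulerianCoeff]

lemma kappa_eq_descentSeries (n : ℕ) :
    kappa n = descentSeries fun i : Fin n => (RatFunc.X : RatFunc ℚ) ^ ((i : ℕ) + 1) := by
  simp [kappa, descentSeries, maj, prod_pow_eq_pow_sum]

/-- Group-algebra form of the internal-product identity `K_n(q) ∗ Φ_n = (q)_{n−1} Φ_n`: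
in `ℚ(q)[S_{n+1}]`, `φ·κ = (∏_{i=1}^{n} (1 − qⁱ))·φ`. -/
theorem phi_kappa_product (n : ℕ) :
    phi n * kappa n = (∏ i ∈ Finset.range n, (1 - (RatFunc.X : RatFunc ℚ) ^ (i + 1))) • phi n := by
  rw [phi_eq_firstEulerian, kappa_eq_descentSeries, phi_kappa_product_general,
    Fin.prod_univ_eq_prod_range (fun i => 1 - (RatFunc.X : RatFunc ℚ) ^ (i + 1))]

end

end Descents14
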